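/- For any continuous almost embedding g : K5−(4,5) → ℝ² one has l(g) := w(g|_{K3}, g(4)) − w(g|_{K3}, g(5)) = ±1. -/

import Mathlib

/-!
Let `A`, `B` be the images of the two vertices outside the triangle, and consider the plane through
`log ((z - A) / (z - B))`.  The closed curve `g(K₃)` avoids `A` and `B`, and its lift to the
logarithmic plane is a path from some point `x₀` through `x₁`, `x₂` to `x₀ + 2πin`, where `n` is the
difference of the winding numbers.  The edges joining `A` to the triangle lift to paths coming from
the left end of the plane to `xᵢ`, and those from `B` to paths coming from the right end.  After
truncation by a wide strip, these two form a line `Pᵢ` through `xᵢ` crossing the strip.  That `g` is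
an almost embedding means that the left branch of `Pᵢ` is disjoint from the right branch of `Pⱼ` for
`i ≠ j`, and that `Pᵢ` is disjoint from the lift of the edge opposite to the vertex `i`, also after
translations by `2πik`.  Nothing prevents the left branches of `Pᵢ` and `Pⱼ` from meeting each
other, nor `Pᵢ` from meeting itself.

For a line `P` the function `D_P` is the difference of the logarithms of `z - x` obtained by
moving the base point to the tip `x` from the right end and from the left end.  It is locally
constant off `P`, is `0` above `P` and `2πi` below, and is antisymmetric:
`D_P(y) + D_Q(x) = 2πi` for the tips `x`, `y` of `P`, `Q` (`Line.D_add_D`).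
Write `E_ij(k) = D_{Pᵢ}(xⱼ + 2πik)`.  As `Pᵢ` avoids the opposite edge, `E_ij(k)` equals the value
for the other end of that edge.  Going around the triangle with this and antisymmetry gives
`E₁₂(k) + E₁₂(-k - n) = 2πi`.

On the other hand, `E₁₂(-d) = 2πi` and `E₁₂(d) = 0` for all `d ≥ 1`.  For this, some lift of `x₁` is
in the top component of the complement of `P₀` in the strip while the lift `d` levels lower is not;
as the edge `12` avoids `P₀`, the same holds for `x₂`, and a line whose tip is in the top component
has all disjoint lines with tips outside this component below it (`Line.D_eq_of_top`).  Now `n = 0`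
is impossible, since `E₁₂(0)` is a multiple of `2πi`; `n ≥ 2` is impossible by taking `k = -1`, and
`n ≤ -2` by taking `k = 1`.
-/

open Set

noncomputable section

/-- The vertex `i` of `K₅` (vertices are 0-indexed: index `i` is vertex `i+1`),
realized as a point of `ℝ⁵`. -/
def vert (i : Fin 5) : Fin 5 → ℝ := Pi.single i 1

/-- The edge between vertices `i` and `j`, realized as a segment in `ℝ⁵`. -/
def seg (i j : Fin 5) : Set (Fin 5 → ℝ) := segment ℝ (vert i) (vert j)

/-- `(i, j)` is an edge of `K₅ − (4,5)`: the edge between vertices `4` and `5`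
(indices `3` and `4`) is deleted. -/
def IsEdge (i j : Fin 5) : Prop := i ≠ j ∧ ({i, j} : Set (Fin 5)) ≠ {3, 4}

/-- The graph `K₅ − (4,5)`, realized as a 1-dimensional simplicial complex in `ℝ⁵`. -/
def K5m45 : Set (Fin 5 → ℝ) := ⋃ (i) (j) (_ : IsEdge i j), seg i j

/-- `g` is a continuous almost embedding of `K₅ − (4,5)` in the plane `ℝ² = ℂ`:
it is continuous on the complex, and the images of any two disjoint
(non-adjacent) edges are disjoint. -/
def AlmostEmb (g : (Fin 5 → ℝ) → ℂ) : Prop :=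
  ContinuousOn g K5m45 ∧
  ∀ i j k l : Fin 5, IsEdge i j → IsEdge k l →
    ({i, j} : Set (Fin 5)) ∩ ({k, l} : Set (Fin 5)) = ∅ →
    Disjoint (g '' seg i j) (g '' seg k l)

/-- The closed curve traversing the cycle `K₃` on vertices `1, 2, 3`, oriented by
the cyclic permutation `(1 2 3)`. -/
def triLoop (t : ℝ) : Fin 5 → ℝ :=
  if t ≤ 1/3 then (1 - 3*t) • vert 0 + (3*t) • vert 1
  else if t ≤ 2/3 then (2 - 3*t) • vert 1 + (3*t - 1) • vert 2
  else (3 - 3*t) • vert 2 + (3*t - 2) • vert 0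

/-- `n` is the winding number around `A` of the closed curve `γ` (a loop
parametrized by `[0,1]`): a continuous logarithm of `γ - A` gains `2πin`
along the loop. -/
def IsWindingNumber (γ : ℝ → ℂ) (A : ℂ) (n : ℤ) : Prop :=
  ∃ h : ℝ → ℂ, ContinuousOn h (Icc 0 1) ∧
    (∀ t ∈ Icc (0:ℝ) 1, γ t = A + Complex.exp (h t)) ∧
    h 1 - h 0 = 2 * (Real.pi : ℂ) * Complex.I * (n : ℂ)


open Filter Topology
open scoped Real

/-! ### Continuous logarithms -/

/-- Two continuous logarithms of the same function differ by a locally constant function, as the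
difference takes values in the discrete set `2πiℤ`. -/
lemma eventually_sub_eq {T : Type*} [TopologicalSpace T] {f g : T → ℂ} {s : T} {l : Filter T}
    (hf : Tendsto f l (𝓝 (f s))) (hg : Tendsto g l (𝓝 (g s)))
    (h : ∀ᶠ t in l, Complex.exp (f t) = Complex.exp (g t))
    (hs : Complex.exp (f s) = Complex.exp (g s)) :
    ∀ᶠ t in l, f t - g t = f s - g s := by
  have h1 : Tendsto (fun t => f t - g t) l (𝓝 (f s - g s)) := hf.sub hg
  have h2 : ∀ᶠ t in l, ‖(f t - g t) - (f s - g s)‖ < 2 * π := by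
    have := h1.eventually (Metric.ball_mem_nhds (f s - g s) Real.two_pi_pos)
    filter_upwards [this] with t ht
    rwa [← dist_eq_norm]
  filter_upwards [h, h2] with t ht ht2
  obtain ⟨m, hm⟩ := Complex.exp_eq_exp_iff_exists_int.1 ht
  obtain ⟨n, hn⟩ := Complex.exp_eq_exp_iff_exists_int.1 hs
  have e : (f t - g t) - (f s - g s) = ((m - n : ℤ) : ℂ) * (2 * π * Complex.I) := by
    rw [hm, hn]; push_cast; ring
  have hn1 : ‖(2 * π * Complex.I : ℂ)‖ = 2 * π := by
    simp [abs_of_pos Real.pi_pos]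
  rw [e, norm_mul, hn1, Complex.norm_intCast] at ht2
  have h3 : |((m - n : ℤ) : ℝ)| < 1 := by
    by_contra hcon
    push Not at hcon
    nlinarith [Real.pi_pos]
  have h4 : m - n = 0 := by
    rw [← Int.cast_abs] at h3
    have : |m - n| < 1 := by exact_mod_cast h3
    exact Int.abs_lt_one_iff.1 this
  rw [h4] at e
  simpa [sub_eq_zero] using e

/-- Two continuous logarithms of the same function on a connected set differ by a constant. -/
lemma sub_eq_of_isPreconnected {T : Type*} [TopologicalSpace T] {S : Set T}
    (hS : IsPreconnected S) {f g : T → ℂ} (hf : ContinuousOn f S) (hg : ContinuousOn g S)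
    (h : ∀ t ∈ S, Complex.exp (f t) = Complex.exp (g t)) {x y : T} (hx : x ∈ S) (hy : y ∈ S) :
    f x - g x = f y - g y := by
  have : PreconnectedSpace S := Subtype.preconnectedSpace hS
  have hloc : IsLocallyConstant (fun t : S => f t - g t) := by
    rw [IsLocallyConstant.iff_eventually_eq]
    intro s
    exact eventually_sub_eq (T := S) (f := fun t : S => f t) (g := fun t : S => g t)
      hf.domRestrict.continuousAt hg.domRestrict.continuousAt
      (Eventually.of_forall fun t => h t t.2) (h s s.2)
  exact hloc.apply_eq_of_preconnectedSpace ⟨x, hx⟩ ⟨y, hy⟩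

open Classical in
/-- The continuous logarithm of the path `γ` with initial value `c`
(and the constant `0` if there is none, e.g. if `γ` passes through `0`). -/
def contLog (γ : unitInterval → ℂ) (c : ℂ) : unitInterval → ℂ :=
  if h : ∃ f : unitInterval → ℂ, Continuous f ∧ (∀ s, Complex.exp (f s) = γ s) ∧ f 0 = c
  then h.choose else 0

lemma contLog_eq {γ f : unitInterval → ℂ} {c : ℂ} (hf : Continuous f)
    (hexp : ∀ s, Complex.exp (f s) = γ s) (h0 : f 0 = c) : contLog γ c = f := by
  have h : ∃ f : unitInterval → ℂ, Continuous f ∧ (∀ s, Complex.exp (f s) = γ s) ∧ f 0 = c :=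
    ⟨f, hf, hexp, h0⟩
  obtain ⟨c1, c2, c3⟩ := h.choose_spec
  have : contLog γ c = h.choose := by rw [contLog, dif_pos h]
  rw [this]
  ext s
  have := sub_eq_of_isPreconnected isPreconnected_univ c1.continuousOn hf.continuousOn
    (fun t _ => by rw [c2, hexp]) (mem_univ s) (mem_univ 0)
  rw [c3, h0, sub_self, sub_eq_zero] at this
  exact this

/-- The homotopy lifting property of `exp`: continuous logarithms of the paths `s ↦ z - γ s`
depend continuously on `z`, if their initial values do. -/
lemma contLog_spec {γ : unitInterval → ℂ} (hγ : Continuous γ) {A : Set ℂ} {f0 : ℂ → ℂ}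
    (hA : ∀ z ∈ A, ∀ s, γ s ≠ z) (hf0 : ContinuousOn f0 A)
    (hexp : ∀ z ∈ A, Complex.exp (f0 z) = z - γ 0) :
    ContinuousOn (fun z => contLog (fun s => z - γ s) (f0 z) 1) A ∧
    ∀ z ∈ A, ∀ s, Complex.exp (contLog (fun s => z - γ s) (f0 z) s) = z - γ s := by
  let H : C(unitInterval × A, {z : ℂ // z ≠ 0}) :=
    ⟨fun q => ⟨q.2 - γ q.1, sub_ne_zero.2 (hA _ q.2.2 q.1).symm⟩, by fun_prop⟩
  let f : C(A, ℂ) := ⟨fun a => f0 a, hf0.domRestrict⟩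
  have H0 : ∀ a, H (0, a) = (fun z : ℂ ↦ (⟨_, z.exp_ne_zero⟩ : {z : ℂ // z ≠ 0})) (f a) := by
    intro a
    apply Subtype.ext
    exact (hexp a a.2).symm
  let G := Complex.isCoveringMap_exp.liftHomotopy H f H0
  have hG : ∀ q : unitInterval × A, Complex.exp (G q) = q.2 - γ q.1 := fun q =>
    congrArg Subtype.val (congr_fun (Complex.isCoveringMap_exp.liftHomotopy_lifts H f H0) q)
  have hG0 : ∀ a : A, G (0, a) = f0 a := Complex.isCoveringMap_exp.liftHomotopy_zero H f H0
  have key : ∀ a : A, contLog (fun s => a - γ s) (f0 a) = fun s => G (s, a) := fun a =>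
    contLog_eq (by fun_prop) (fun s => hG (s, a)) (hG0 a)
  constructor
  · rw [continuousOn_iff_continuous_domRestrict]
    have : A.domRestrict (fun z => contLog (fun s => z - γ s) (f0 z) 1) = fun a => G (1, a) := by
      ext a
      simp only [Set.domRestrict_apply]
      rw [key a]
    rw [this]
    fun_prop
  · intro z hz s
    have := key ⟨z, hz⟩
    simp only at this
    rw [this]
    exact hG (s, ⟨z, hz⟩)

/-! ### Bi-infinite lines in a strip -/

lemma log_neg_of_im_pos {w : ℂ} (h : 0 < w.im) :
    Complex.log (-w) = Complex.log w - π * Complex.I := by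
  rw [Complex.log, Complex.log, norm_neg, Complex.arg_neg_eq_arg_sub_pi_of_im_pos h]
  push_cast; ring

lemma log_neg_of_im_neg {w : ℂ} (h : w.im < 0) :
    Complex.log (-w) = Complex.log w + π * Complex.I := by
  rw [Complex.log, Complex.log, norm_neg, Complex.arg_neg_eq_arg_add_pi_of_im_neg h]
  push_cast; ring

lemma exp_log_neg_add {w : ℂ} (h : w ≠ 0) :
    Complex.exp (Complex.log (-w) + π * Complex.I) = w := by
  rw [Complex.exp_add, Complex.exp_log (neg_ne_zero.2 h), Complex.exp_pi_mul_I]; ring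

/-- A path `a` from the left of the strip `|Re z| < N` to a point, and a path `b` from the right
of the strip to the same point.  Together they stand for a bi-infinite line crossing the strip
from left to right. -/
structure Line (N : ℝ) where
  a : unitInterval → ℂ
  b : unitInterval → ℂ
  ca : Continuous a
  cb : Continuous b
  a_zero : (a 0).re ≤ -N
  b_zero : N ≤ (b 0).re
  a_lt : ∀ s, (a s).re < N
  b_gt : ∀ s, -N < (b s).re
  a_one : a 1 = b 1

namespace Line

variable {N : ℝ} (P Q : Line N)

/-- The common end of the two branches. -/
def tip : ℂ := P.b 1

/-- The logarithm of `z - P.tip` on `Re z < N`, off the branch `P.b`, which has argument `π` far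
to the left.  It is obtained by moving `w` in `log (z - w)` along `P.b`. -/
def L (z : ℂ) : ℂ := contLog (fun s => z - P.b s) (Complex.log (-(z - P.b 0)) + π * Complex.I) 1

/-- The logarithm of `z - P.tip` on `-N < Re z`, off the branch `P.a`, which has argument `0` far
to the right. -/
def R (z : ℂ) : ℂ := contLog (fun s => z - P.a s) (Complex.log (z - P.a 0)) 1

/-- The function which distinguishes the sides of the line: on the strip off the line it is locally
constant with values in `2πiℤ`, `0` high above the line, and `2πi` far below the line. -/
def D (z : ℂ) : ℂ := P.L z - P.R z

lemma L_spec : ContinuousOn P.L {z | z.re < N ∧ ∀ s, P.b s ≠ z} ∧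
    ∀ z : ℂ, z.re < N → (∀ s, P.b s ≠ z) → Complex.exp (P.L z) = z - P.tip := by
  have h := contLog_spec P.cb (A := {z | z.re < N ∧ ∀ s, P.b s ≠ z})
    (f0 := fun z => Complex.log (-(z - P.b 0)) + π * Complex.I) (fun z hz => hz.2) ?_ ?_
  · exact ⟨h.1, fun z hz hz' => h.2 z ⟨hz, hz'⟩ 1⟩
  · refine ContinuousOn.add (ContinuousOn.clog (by fun_prop) fun z hz => Or.inl ?_) (by fun_prop)
    have := P.b_zero
    simp only [Complex.neg_re, Complex.sub_re]
    linarith [hz.1]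
  · intro z hz
    exact exp_log_neg_add (sub_ne_zero.2 (hz.2 0).symm)

lemma R_spec : ContinuousOn P.R {z | -N < z.re ∧ ∀ s, P.a s ≠ z} ∧
    ∀ z : ℂ, -N < z.re → (∀ s, P.a s ≠ z) → Complex.exp (P.R z) = z - P.tip := by
  have h := contLog_spec P.ca (A := {z | -N < z.re ∧ ∀ s, P.a s ≠ z})
    (f0 := fun z => Complex.log (z - P.a 0)) (fun z hz => hz.2) ?_ ?_
  · refine ⟨h.1, fun z hz hz' => ?_⟩
    rw [tip, ← P.a_one]
    exact h.2 z ⟨hz, hz'⟩ 1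
  · refine ContinuousOn.clog (by fun_prop) fun z hz => Or.inl ?_
    have := P.a_zero
    simp only [Complex.sub_re]
    linarith [hz.1]
  · intro z hz
    exact Complex.exp_log (sub_ne_zero.2 (hz.2 0).symm)

lemma L_eq_of_slitPlane {z : ℂ} (h : ∀ s, -(z - P.b s) ∈ Complex.slitPlane) :
    P.L z = Complex.log (-(z - P.tip)) + π * Complex.I := by
  have hb := P.cb
  rw [L, contLog_eq (f := fun s => Complex.log (-(z - P.b s)) + π * Complex.I) _ _ rfl, tip]
  · exact (Continuous.clog (by fun_prop) h).add continuous_const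
  · intro s
    exact exp_log_neg_add (neg_ne_zero.1 (Complex.slitPlane_ne_zero (h s)))

lemma R_eq_of_slitPlane {z : ℂ} (h : ∀ s, z - P.a s ∈ Complex.slitPlane) :
    P.R z = Complex.log (z - P.tip) := by
  have ha := P.ca
  rw [R, contLog_eq (f := fun s => Complex.log (z - P.a s)) _ _ rfl, tip, ← P.a_one]
  · exact Continuous.clog (by fun_prop) h
  · intro s
    exact Complex.exp_log (Complex.slitPlane_ne_zero (h s))

lemma L_left {z : ℂ} (hz : z.re ≤ -N) :
    P.L z = Complex.log (-(z - P.tip)) + π * Complex.I := by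
  refine P.L_eq_of_slitPlane fun s => Or.inl ?_
  have := P.b_gt s
  simp only [Complex.neg_re, Complex.sub_re]
  linarith

lemma R_right {z : ℂ} (hz : N ≤ z.re) : P.R z = Complex.log (z - P.tip) := by
  refine P.R_eq_of_slitPlane fun s => Or.inl ?_
  have := P.a_lt s
  simp only [Complex.sub_re]
  linarith

/-- The open strip `|Re z| < N` minus the line. -/
def free : Set ℂ := {z | -N < z.re ∧ z.re < N ∧ (∀ s, P.a s ≠ z) ∧ ∀ s, P.b s ≠ z}

lemma isOpen_free : IsOpen P.free := by
  have h1 : IsClosed (range P.a) := (isCompact_range P.ca).isClosed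
  have h2 : IsClosed (range P.b) := (isCompact_range P.cb).isClosed
  have h3 : P.free = {z | -N < z.re} ∩ {z | z.re < N} ∩ (range P.a)ᶜ ∩ (range P.b)ᶜ := by
    ext z; simp [free, and_assoc]
  rw [h3]
  exact (((isOpen_lt continuous_const Complex.continuous_re).inter
    (isOpen_lt Complex.continuous_re continuous_const)).inter h1.isOpen_compl).inter
    h2.isOpen_compl

lemma tip_re : -N < P.tip.re ∧ P.tip.re < N := by
  refine ⟨P.b_gt 1, ?_⟩
  have := P.a_lt 1
  rwa [P.a_one] at this

/-- `D` is constant on connected sets off the line. -/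
lemma D_eq {S : Set ℂ} (hS : IsPreconnected S) (h : S ⊆ P.free) {x y : ℂ} (hx : x ∈ S)
    (hy : y ∈ S) : P.D x = P.D y := by
  refine sub_eq_of_isPreconnected hS (P.L_spec.1.mono fun z hz => ⟨(h hz).2.1, (h hz).2.2.2⟩)
    (P.R_spec.1.mono fun z hz => ⟨(h hz).1, (h hz).2.2.1⟩) (fun z hz => ?_) hx hy
  rw [P.L_spec.2 z (h hz).2.1 (h hz).2.2.2, P.R_spec.2 z (h hz).1 (h hz).2.2.1]

lemma exists_int_D {z : ℂ} (h : z ∈ P.free) : ∃ n : ℤ, P.D z = n * (2 * π * Complex.I) := by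
  rw [← Complex.exp_eq_one_iff, D, Complex.exp_sub, P.L_spec.2 z h.2.1 h.2.2.2,
    P.R_spec.2 z h.1 h.2.2.1, div_self]
  have := h.2.2.2 1
  exact sub_ne_zero.2 this.symm

lemma D_high {z : ℂ} (ha : ∀ s, (P.a s).im < z.im) (hb : ∀ s, (P.b s).im < z.im) :
    P.D z = 0 := by
  rw [D, P.L_eq_of_slitPlane, P.R_eq_of_slitPlane, log_neg_of_im_pos]
  · ring
  · have := hb 1
    simp only [tip, Complex.sub_im]
    linarith
  · intro s
    refine Or.inr ?_
    have := ha s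
    simp only [Complex.sub_im]
    linarith
  · intro s
    refine Or.inr ?_
    have := hb s
    simp only [Complex.sub_im, Complex.neg_im]
    linarith

lemma D_low {z : ℂ} (ha : ∀ s, z.im < (P.a s).im) (hb : ∀ s, z.im < (P.b s).im) :
    P.D z = 2 * π * Complex.I := by
  rw [D, P.L_eq_of_slitPlane, P.R_eq_of_slitPlane, log_neg_of_im_neg]
  · ring
  · have := hb 1
    simp only [tip, Complex.sub_im]
    linarith
  · intro s
    refine Or.inr ?_
    have := ha s
    simp only [Complex.sub_im]
    linarith
  · intro s
    refine Or.inr ?_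
    have := hb s
    simp only [Complex.sub_im, Complex.neg_im]
    linarith

/-- Along the branch `Q.a` to `Q.tip`, the function `P.L - πi` is a continuous logarithm of
`P.tip - w`, and so is the path defining `Q.R P.tip`.  They agree at the start of the branch. -/
lemma L_tip (h : ∀ s t, P.b s ≠ Q.a t) : P.L Q.tip = Q.R P.tip + π * Complex.I := by
  have ha := Q.ca
  have hc : Continuous fun s => P.L (Q.a s) - π * Complex.I := by
    refine Continuous.sub ?_ continuous_const
    exact P.L_spec.1.comp_continuous Q.ca fun s => ⟨Q.a_lt s, fun t => h t s⟩
  rw [R, contLog_eq hc]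
  · rw [sub_add_cancel, Q.a_one, tip]
  · intro s
    rw [Complex.exp_sub, P.L_spec.2 _ (Q.a_lt s) fun t => h t s, Complex.exp_pi_mul_I]
    ring
  · rw [P.L_left Q.a_zero, add_sub_cancel_right, neg_sub]

/-- Antisymmetry of the relation of sides: the tip of `Q` is below `P` as much as the tip of `P` is
above `Q`.  Only branches on opposite sides have to be disjoint: `P.a` may meet `Q.a`, and `P.b`
may meet `Q.b`. -/
lemma D_add_D (h1 : ∀ s t, P.b s ≠ Q.a t) (h2 : ∀ s t, Q.b s ≠ P.a t) :
    P.D Q.tip + Q.D P.tip = 2 * π * Complex.I := by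
  rw [D, D, L_tip P Q h1, L_tip Q P h2]
  ring

/-- The line translated by `2πik`. -/
@[simps] def shift (k : ℤ) : Line N where
  a s := P.a s + 2 * π * Complex.I * k
  b s := P.b s + 2 * π * Complex.I * k
  ca := P.ca.add continuous_const
  cb := P.cb.add continuous_const
  a_zero := by simpa using P.a_zero
  b_zero := by simpa using P.b_zero
  a_lt s := by simpa using P.a_lt s
  b_gt s := by simpa using P.b_gt s
  a_one := by rw [P.a_one]

lemma shift_tip (k : ℤ) : (P.shift k).tip = P.tip + 2 * π * Complex.I * k := rfl

lemma shift_D (k : ℤ) (z : ℂ) : (P.shift k).D (z + 2 * π * Complex.I * k) = P.D z := by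
  simp only [D, L, R, shift_a, shift_b, add_sub_add_right_eq_sub]

lemma exists_bound : ∃ M : ℝ, 0 < M ∧ (∀ s, |(P.a s).im| < M) ∧ ∀ s, |(P.b s).im| < M := by
  obtain ⟨A, hA⟩ := (isCompact_range (Complex.continuous_im.comp P.ca).abs).bddAbove
  obtain ⟨B, hB⟩ := (isCompact_range (Complex.continuous_im.comp P.cb).abs).bddAbove
  have hA' : ∀ s, |(P.a s).im| ≤ A := fun s => hA (mem_range_self s)
  have hB' : ∀ s, |(P.b s).im| ≤ B := fun s => hB (mem_range_self s)
  refine ⟨max A B + 1, ?_, fun s => ?_, fun s => ?_⟩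
  · have := (abs_nonneg _).trans ((hA' 0).trans (le_max_left A B)); linarith
  · have := (hA' s).trans (le_max_left A B); linarith
  · have := (hB' s).trans (le_max_right A B); linarith

/-- A bound for the imaginary parts on the line. -/
def M : ℝ := P.exists_bound.choose

lemma a_im (s) : |(P.a s).im| < P.M := P.exists_bound.choose_spec.2.1 s
lemma b_im (s) : |(P.b s).im| < P.M := P.exists_bound.choose_spec.2.2 s

/-- The component of the strip minus the line that contains all points high above. -/
def top : Set ℂ := connectedComponentIn P.free (P.M * Complex.I)

lemma high_subset : {z : ℂ | -N < z.re ∧ z.re < N ∧ P.M ≤ z.im} ⊆ P.free := by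
  rintro z ⟨h1, h2, h3⟩
  refine ⟨h1, h2, fun s hs => ?_, fun s hs => ?_⟩
  · have := (abs_lt.1 (P.a_im s)).2; rw [hs] at this; linarith
  · have := (abs_lt.1 (P.b_im s)).2; rw [hs] at this; linarith

lemma N_pos {N : ℝ} (P : Line N) : 0 < N := by linarith [P.tip_re.1, P.tip_re.2]

lemma mem_top_of_high {z : ℂ} (h1 : -N < z.re) (h2 : z.re < N) (h3 : P.M ≤ z.im) :
    z ∈ P.top := by
  have hc : Convex ℝ {z : ℂ | -N < z.re ∧ z.re < N ∧ P.M ≤ z.im} :=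
    (convex_halfSpace_re_gt _).inter ((convex_halfSpace_re_lt _).inter (convex_halfSpace_im_ge _))
  refine hc.isPreconnected.subset_connectedComponentIn ?_ P.high_subset ⟨h1, h2, h3⟩
  have := P.N_pos
  simp [this]

lemma top_subset : P.top ⊆ P.free := connectedComponentIn_subset _ _

lemma isOpen_top : IsOpen P.top := P.isOpen_free.connectedComponentIn

lemma isPathConnected_top : IsPathConnected P.top := by
  have h : ((P.M : ℂ) * Complex.I) ∈ P.free := by
    refine P.high_subset ?_
    have := P.N_pos
    simp [this]
  exact (P.isOpen_top.isConnected_iff_isPathConnected).1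
    (isConnected_connectedComponentIn_iff.2 h)

lemma notMem_top_of_low {z : ℂ} (h3 : z.im ≤ -P.M) : z ∉ P.top := by
  intro h
  have h0 : ((P.M : ℂ) * Complex.I) ∈ P.top := by
    have := P.N_pos
    exact P.mem_top_of_high (by simp [this]) (by simp [this]) (by simp)
  have := P.D_eq isPreconnected_connectedComponentIn P.top_subset h h0
  rw [P.D_low, P.D_high] at this
  · simp [Real.pi_ne_zero] at this
  · intro s; simpa using (abs_lt.1 (P.a_im s)).2
  · intro s; simpa using (abs_lt.1 (P.b_im s)).2
  · intro s; exact h3.trans_lt (abs_lt.1 (P.a_im s)).1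
  · intro s; exact h3.trans_lt (abs_lt.1 (P.b_im s)).1

lemma mem_top_iff {S : Set ℂ} (hS : IsPreconnected S) (h : S ⊆ P.free) {x y : ℂ} (hx : x ∈ S)
    (hy : y ∈ S) (hxt : x ∈ P.top) : y ∈ P.top := by
  have : S ⊆ P.top := by
    rw [top, connectedComponentIn_eq hxt]
    exact hS.subset_connectedComponentIn hx h
  exact this hy

end Line

/-! ### Sides of disjoint lines -/

/-- Let `F` and `G` be continuous logarithms on `U` of the same function, and let `c` be a path
which stays in `U` as long as it is outside an open set `H`.  If `F` and `G` agree at the start of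
`c`, and at all points of `c` on the boundary of `H`, then they agree at the end of `c`, if it is
not in `H`. -/
lemma propagate {c : unitInterval → ℂ} (hc : Continuous c) {H U : Set ℂ} (hH : IsOpen H)
    (hU : IsOpen U) {F G : ℂ → ℂ} (hF : ContinuousOn F U) (hG : ContinuousOn G U)
    (he : ∀ z ∈ U, Complex.exp (F z) = Complex.exp (G z)) (hcU : ∀ s, c s ∉ H → c s ∈ U)
    (hloc : ∀ s, c s ∉ H → F (c s) ≠ G (c s) → ∃ V, IsOpen V ∧ c s ∈ V ∧ Disjoint V H)
    (h0 : F (c 0) = G (c 0)) (h1 : c 1 ∉ H) : F (c 1) = G (c 1) := by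
  have hconst : ∀ s, c s ∉ H → ∀ᶠ t in 𝓝 s, F (c t) - G (c t) = F (c s) - G (c s) := by
    intro s hs
    have hs' := hU.mem_nhds (hcU s hs)
    have hcs : Tendsto c (𝓝 s) (𝓝 (c s)) := hc.continuousAt
    refine eventually_sub_eq (f := fun t => F (c t)) (g := fun t => G (c t))
      ((hF.continuousAt hs').tendsto.comp hcs) ((hG.continuousAt hs').tendsto.comp hcs) ?_
      (he _ (hcU s hs))
    filter_upwards [hcs hs'] with t ht using he _ ht
  have hT : IsClopen {s | c s ∈ H ∨ F (c s) = G (c s)} := by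
    constructor
    · rw [← isOpen_compl_iff, isOpen_iff_mem_nhds]
      intro s hs
      simp only [mem_compl_iff, mem_ofPred_eq, not_or] at hs
      obtain ⟨V, hV, hsV, hVH⟩ := hloc s hs.1 hs.2
      filter_upwards [hconst s hs.1, hc.continuousAt (hV.mem_nhds hsV)] with t ht ht'
      simp only [mem_compl_iff, mem_ofPred_eq, not_or]
      refine ⟨disjoint_left.1 hVH ht', fun h => hs.2 ?_⟩
      rw [h, sub_self] at ht
      exact sub_eq_zero.1 ht.symm
    · rw [isOpen_iff_mem_nhds]
      intro s hs
      by_cases hsH : c s ∈ H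
      · filter_upwards [hc.continuousAt (hH.mem_nhds hsH)] with t ht using Or.inl ht
      · filter_upwards [hconst s hsH] with t ht
        rw [hs.resolve_left hsH, sub_self, sub_eq_zero] at ht
        exact Or.inr ht
  rcases isClopen_iff.1 hT with h | h
  · exact absurd (show (0 : unitInterval) ∈ {s | c s ∈ H ∨ F (c s) = G (c s)} from Or.inr h0)
      (by rw [h]; exact notMem_empty _)
  · have : (1 : unitInterval) ∈ {s | c s ∈ H ∨ F (c s) = G (c s)} := by rw [h]; trivial
    exact this.resolve_left h1

lemma log_neg_I_mul {w : ℂ} (h1 : 0 < w.re) :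
    Complex.log (-Complex.I * w) = Complex.log w - π / 2 * Complex.I := by
  have hw : w ≠ 0 := by rintro rfl; simp at h1
  have h := abs_lt.1 (Complex.abs_arg_lt_pi_div_two_iff.2 (Or.inl h1))
  have e : -Complex.I * w = Complex.exp (Complex.log w - π / 2 * Complex.I) := by
    rw [Complex.exp_sub, Complex.exp_log hw, Complex.exp_pi_div_two_mul_I, div_eq_mul_inv,
      Complex.inv_I, mul_comm]
  rw [e, Complex.log_exp]
  · have : (Complex.log w - π / 2 * Complex.I).im = w.arg - π / 2 := by
      simp [Complex.log_im]
    rw [this]; linarith [h.1]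
  · have : (Complex.log w - π / 2 * Complex.I).im = w.arg - π / 2 := by
      simp [Complex.log_im]
    rw [this]; linarith [h.2, Real.pi_pos]

lemma log_I_mul {w : ℂ} (h1 : 0 < w.re) :
    Complex.log (Complex.I * w) = Complex.log w + π / 2 * Complex.I := by
  have hw : w ≠ 0 := by rintro rfl; simp at h1
  have h := abs_lt.1 (Complex.abs_arg_lt_pi_div_two_iff.2 (Or.inl h1))
  have e : Complex.I * w = Complex.exp (Complex.log w + π / 2 * Complex.I) := by
    rw [Complex.exp_add, Complex.exp_log hw, Complex.exp_pi_div_two_mul_I, mul_comm]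
  have : (Complex.log w + π / 2 * Complex.I).im = w.arg + π / 2 := by
    simp [Complex.log_im]
  rw [e, Complex.log_exp]
  · rw [this]; linarith [h.1, Real.pi_pos]
  · rw [this]; linarith [h.2]

lemma exp_three_pi_div_two : Complex.exp (3 * π / 2 * Complex.I) = -Complex.I := by
  have : (3 * π / 2 * Complex.I : ℂ) = π * Complex.I + π / 2 * Complex.I := by ring
  rw [this, Complex.exp_add, Complex.exp_pi_mul_I, Complex.exp_pi_div_two_mul_I]; ring

namespace Line

variable {N : ℝ}

/-- Suppose that the branches `a` and `b` of different lines among `X`, `Y`, `Z` are disjoint.  If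
the tip of `Z` lies in the top component of the complement of `Y` and the tip of `X` does not,
then the tip of `X` is below `Z`.  Indeed, joining the tip of `Z` to a high point in the top
component gives a third logarithm `G`, whose cut goes upwards.  It agrees with `Z.L` on the left
and with `Z.R + 2πi` on the right, and this persists along `Y`, which the cut does not meet, and
then along `X` up to its tip, since `X` can only leave the top component through `Y`. -/
theorem D_eq_of_top (X Y Z : Line N)
    (hXY : ∀ s t, X.a s ≠ Y.b t) (hYX : ∀ s t, X.b s ≠ Y.a t)
    (hXZ : ∀ s t, X.a s ≠ Z.b t) (hZX : ∀ s t, X.b s ≠ Z.a t)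
    (hYZ : ∀ s t, Y.a s ≠ Z.b t) (hZY : ∀ s t, Y.b s ≠ Z.a t)
    (hZ : Z.tip ∈ Y.top) (hX : X.tip ∉ Y.top) : Z.D X.tip = 2 * π * Complex.I := by
  have hN := X.N_pos
  set m := max X.M Y.M with hm
  have hiT : ((m : ℂ) * Complex.I) ∈ Y.top :=
    Y.mem_top_of_high (by simp [hN]) (by simp [hN]) (by simp [hm])
  obtain ⟨γ, hγ⟩ := Y.isPathConnected_top.joinedIn _ hiT _ hZ
  have hγF := fun s => Y.top_subset (hγ s)
  have hγ0 : γ 0 = (m : ℂ) * Complex.I := γ.source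
  have hγ1 : γ 1 = Z.tip := γ.target
  set f0 : ℂ → ℂ := fun z => Complex.log (Complex.I * (z - γ 0)) + 3 * π / 2 * Complex.I with hf0
  set A : Set ℂ := {z | z.im < m ∧ ∀ s, γ s ≠ z} with hA
  have hAo : IsOpen A := by
    have h1 : IsClosed (range γ) := (isCompact_range γ.continuous).isClosed
    have h3 : A = {z | z.im < m} ∩ (range γ)ᶜ := by ext z; simp [hA]
    rw [h3]
    exact (isOpen_lt Complex.continuous_im continuous_const).inter h1.isOpen_compl
  have hG := contLog_spec (γ := γ) γ.continuous (A := A) (f0 := f0) (fun z hz => hz.2) ?_ ?_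
  rotate_left
  · refine ContinuousOn.add (ContinuousOn.clog (by fun_prop) fun z hz => Or.inl ?_) (by fun_prop)
    have := hz.1
    simp [hγ0]
    exact this
  · intro z hz
    simp only [hf0]
    rw [Complex.exp_add, Complex.exp_log, exp_three_pi_div_two]
    · linear_combination (-(z - γ 0)) * Complex.I_sq
    · exact mul_ne_zero Complex.I_ne_zero (sub_ne_zero.2 (hz.2 0).symm)
  obtain ⟨hGc, hGe⟩ := hG
  set G : ℂ → ℂ := fun z => contLog (fun s => z - γ s) (f0 z) 1 with hGdef
  have hGe' : ∀ z ∈ A, Complex.exp (G z) = z - Z.tip := fun z hz => by rw [← hγ1]; exact hGe z hz 1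
  have hGL : ∀ z : ℂ, z.re ≤ -N → G z = Z.L z := by
    intro z hz
    have hre : ∀ s, 0 < (-(z - γ s)).re := by
      intro s
      have := (hγF s).1
      simp only [Complex.neg_re, Complex.sub_re]; linarith
    rw [Z.L_left hz, hGdef]
    simp only
    rw [contLog_eq (f := fun s => Complex.log (-(z - γ s)) + π * Complex.I)]
    · simp only [hγ1]
    · have := γ.continuous
      exact (Continuous.clog (by fun_prop) fun s => Or.inl (hre s)).add continuous_const
    · intro s
      refine exp_log_neg_add fun h => ?_
      have := hre s
      rw [h] at this; simp at this
    · simp only [hf0]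
      have : Complex.I * (z - γ 0) = -Complex.I * -(z - γ 0) := by ring
      rw [this, log_neg_I_mul (hre 0)]
      ring
  have hGR : ∀ z : ℂ, N ≤ z.re → G z = Z.R z + 2 * π * Complex.I := by
    intro z hz
    have hre : ∀ s, 0 < (z - γ s).re := by
      intro s
      have := (hγF s).2.1
      simp only [Complex.sub_re]; linarith
    rw [Z.R_right hz, hGdef]
    simp only
    rw [contLog_eq (f := fun s => Complex.log (z - γ s) + 2 * π * Complex.I)]
    · simp only [hγ1]
    · have := γ.continuous
      exact (Continuous.clog (by fun_prop) fun s => Or.inl (hre s)).add continuous_const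
    · intro s
      rw [Complex.exp_add, Complex.exp_two_pi_mul_I, mul_one, Complex.exp_log]
      intro h
      have := hre s
      rw [h] at this; simp at this
    · simp only [hf0]
      rw [log_I_mul (hre 0)]
      ring
  -- the branches of `Y` avoid the cut of `G`
  have hYa : ∀ s, Y.a s ∈ A := fun s =>
    ⟨((abs_lt.1 (Y.a_im s)).2).trans_le (le_max_right _ _), fun t h => (hγF t).2.2.1 s h.symm⟩
  have hYb : ∀ s, Y.b s ∈ A := fun s =>
    ⟨((abs_lt.1 (Y.b_im s)).2).trans_le (le_max_right _ _), fun t h => (hγF t).2.2.2 s h.symm⟩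
  set UL : Set ℂ := {z | z.re < N ∧ ∀ s, Z.b s ≠ z} with hUL
  set UR : Set ℂ := {z | -N < z.re ∧ ∀ s, Z.a s ≠ z} with hUR
  have hULo : IsOpen UL := by
    have h1 : IsClosed (range Z.b) := (isCompact_range Z.cb).isClosed
    have h3 : UL = {z | z.re < N} ∩ (range Z.b)ᶜ := by ext z; simp [hUL]
    rw [h3]
    exact (isOpen_lt Complex.continuous_re continuous_const).inter h1.isOpen_compl
  have hURo : IsOpen UR := by
    have h1 : IsClosed (range Z.a) := (isCompact_range Z.ca).isClosed
    have h3 : UR = {z | -N < z.re} ∩ (range Z.a)ᶜ := by ext z; simp [hUR]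
    rw [h3]
    exact (isOpen_lt continuous_const Complex.continuous_re).inter h1.isOpen_compl
  have heL : ∀ z ∈ A ∩ UL, Complex.exp (G z) = Complex.exp (Z.L z) := fun z hz => by
    rw [hGe' z hz.1, Z.L_spec.2 z hz.2.1 hz.2.2]
  have heR : ∀ z ∈ A ∩ UR, Complex.exp (G z) = Complex.exp (Z.R z + 2 * π * Complex.I) :=
    fun z hz => by
      rw [hGe' z hz.1, Complex.exp_add, Z.R_spec.2 z hz.2.1 hz.2.2, Complex.exp_two_pi_mul_I,
        mul_one]
  have hLc : ContinuousOn Z.L (A ∩ UL) := Z.L_spec.1.mono inter_subset_right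
  have hRc : ContinuousOn (fun z => Z.R z + 2 * π * Complex.I) (A ∩ UR) :=
    (Z.R_spec.1.mono inter_subset_right).add continuousOn_const
  have hYaL : ∀ s, Y.a s ∈ A ∩ UL := fun s => ⟨hYa s, Y.a_lt s, fun t => (hYZ s t).symm⟩
  have hYbR : ∀ s, Y.b s ∈ A ∩ UR := fun s => ⟨hYb s, Y.b_gt s, fun t => (hZY s t).symm⟩
  have hGYa : ∀ s, G (Y.a s) = Z.L (Y.a s) := by
    intro s
    have := propagate (c := fun t => Y.a (s * t)) (H := ∅) (Y.ca.comp (by fun_prop)) isOpen_empty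
      (hAo.inter hULo) (hGc.mono inter_subset_left) hLc heL (fun t _ => hYaL _)
      (fun t _ _ => ⟨univ, isOpen_univ, mem_univ _, disjoint_empty _⟩)
      (by simpa using hGL _ Y.a_zero) (notMem_empty _)
    simpa using this
  have hGYb : ∀ s, G (Y.b s) = Z.R (Y.b s) + 2 * π * Complex.I := by
    intro s
    have := propagate (c := fun t => Y.b (s * t)) (H := ∅) (G := fun z => Z.R z + 2 * π * Complex.I)
      (Y.cb.comp (by fun_prop)) isOpen_empty
      (hAo.inter hURo) (hGc.mono inter_subset_left) hRc heR (fun t _ => hYbR _)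
      (fun t _ _ => ⟨univ, isOpen_univ, mem_univ _, disjoint_empty _⟩)
      (by simpa using hGR _ Y.b_zero) (notMem_empty _)
    simpa using this
  have hXa : ∀ s, X.a s ∉ Y.top → X.a s ∈ A ∩ UL := fun s hs =>
    ⟨⟨((abs_lt.1 (X.a_im s)).2).trans_le (le_max_left _ _), fun t h => hs (h ▸ hγ t)⟩,
      X.a_lt s, fun t => (hXZ s t).symm⟩
  have hXb : ∀ s, X.b s ∉ Y.top → X.b s ∈ A ∩ UR := fun s hs =>
    ⟨⟨((abs_lt.1 (X.b_im s)).2).trans_le (le_max_left _ _), fun t h => hs (h ▸ hγ t)⟩,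
      X.b_gt s, fun t => (hZX s t).symm⟩
  have hcomp : ∀ z ∈ Y.free, z ∉ Y.top → ∃ V, IsOpen V ∧ z ∈ V ∧ Disjoint V Y.top := by
    intro z hz hzt
    refine ⟨connectedComponentIn Y.free z, Y.isOpen_free.connectedComponentIn,
      mem_connectedComponentIn hz, disjoint_left.2 fun w hw hwt => hzt ?_⟩
    exact Y.mem_top_iff isPreconnected_connectedComponentIn (connectedComponentIn_subset _ _) hw
      (mem_connectedComponentIn hz) hwt
  have h1 : G (X.a 1) = Z.L (X.a 1) := by
    refine propagate X.ca Y.isOpen_top (hAo.inter hULo) (hGc.mono inter_subset_left) hLc heL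
      hXa (fun s hs hne => hcomp _ ⟨?_, X.a_lt s, fun t h => ?_, fun t => (hXY s t).symm⟩ hs)
      (hGL _ X.a_zero) (by rw [X.a_one]; exact hX)
    · by_contra hle
      exact hne (hGL _ (not_lt.1 hle))
    · exact hne (by rw [← h]; exact hGYa t)
  have h2 : G (X.b 1) = Z.R (X.b 1) + 2 * π * Complex.I := by
    refine propagate (G := fun z => Z.R z + 2 * π * Complex.I) X.cb Y.isOpen_top
      (hAo.inter hURo) (hGc.mono inter_subset_left) hRc heR
      hXb (fun s hs hne => hcomp _ ⟨X.b_gt s, ?_, fun t => (hYX s t).symm, fun t h => ?_⟩ hs)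
      (hGR _ X.b_zero) hX
    · by_contra hle
      exact hne (hGR _ (not_lt.1 hle))
    · exact hne (by rw [← h]; exact hGYb t)
  rw [X.a_one] at h1
  rw [D, tip, ← h1, h2]
  ring

end Line

/-! ### Three lines -/

namespace Line

variable {N : ℝ}

/-- The lifted form of the theorem: `P i` are the lines through the three lifted vertices, and `C i`
are the lifted edges of the triangle opposite to them; the last edge ends at the translate of the
first vertex by `2πin`.  The lines are disjoint from the edges, and branches `a` and `b` of
different lines are disjoint, also after translations. -/
theorem eq_one_or_eq_neg_one (P : Fin 3 → Line N) (n : ℤ)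
    (h : ∀ i j, i ≠ j → ∀ (k : ℤ) s t, (P i).a s ≠ (P j).b t + 2 * π * Complex.I * k)
    (C : Fin 3 → Set ℂ) (hC : ∀ i, IsPreconnected (C i))
    (hfree : ∀ i (k : ℤ), ∀ z ∈ C i, z + 2 * π * Complex.I * k ∈ (P i).free)
    (h01 : (P 1).tip ∈ C 0) (h02 : (P 2).tip ∈ C 0)
    (h20 : (P 0).tip ∈ C 2) (h21 : (P 1).tip ∈ C 2)
    (h12 : (P 2).tip ∈ C 1) (h10 : (P 0).tip + 2 * π * Complex.I * n ∈ C 1) :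
    n = 1 ∨ n = -1 := by
  have hCk : ∀ i (k : ℤ), IsPreconnected ((fun z => z + 2 * π * Complex.I * k) '' C i) :=
    fun i k => (hC i).image _ (by fun_prop)
  have hCf : ∀ i (k : ℤ), ((fun z => z + 2 * π * Complex.I * k) '' C i) ⊆ (P i).free := by
    rintro i k _ ⟨z, hz, rfl⟩
    exact hfree i k z hz
  have hD : ∀ i (k : ℤ) x y, x ∈ C i → y ∈ C i →
      (P i).D (x + 2 * π * Complex.I * k) = (P i).D (y + 2 * π * Complex.I * k) :=
    fun i k x y hx hy => (P i).D_eq (hCk i k) (hCf i k) ⟨x, hx, rfl⟩ ⟨y, hy, rfl⟩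
  have htop : ∀ (k : ℤ) x y, x ∈ C 0 → y ∈ C 0 → x + 2 * π * Complex.I * k ∈ (P 0).top →
      y + 2 * π * Complex.I * k ∈ (P 0).top :=
    fun k x y hx hy => (P 0).mem_top_iff (hCk 0 k) (hCf 0 k) ⟨x, hx, rfl⟩ ⟨y, hy, rfl⟩
  have hs : ∀ i j, i ≠ j → ∀ (k l : ℤ) s t, ((P i).shift k).a s ≠ ((P j).shift l).b t := by
    intro i j hij k l s t e
    refine h i j hij (l - k) s t ?_
    simp only [shift_a, shift_b] at e
    push_cast
    linear_combination e
  set E : Fin 3 → Fin 3 → ℤ → ℂ := fun i j k => (P i).D ((P j).tip + 2 * π * Complex.I * k) with hE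
  have hshift : ∀ i j (k l : ℤ), ((P i).shift k).D ((P j).shift l).tip = E i j (l - k) := by
    intro i j k l
    rw [hE, shift_tip]
    simp only
    rw [← shift_D (P i) k]
    congr 1
    push_cast; ring
  have hanti : ∀ i j, i ≠ j → ∀ k : ℤ, E i j k + E j i (-k) = 2 * π * Complex.I := by
    intro i j hij k
    have := D_add_D ((P i).shift 0) ((P j).shift k) (fun s t => (hs j i hij.symm _ _ _ _).symm)
      (fun s t => (hs i j hij _ _ _ _).symm)
    rwa [hshift, hshift, sub_zero, zero_sub] at this
  have key : ∀ i j, i ≠ 0 → j ≠ 0 → i ≠ j → ∀ k l : ℤ,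
      (P i).tip + 2 * π * Complex.I * k ∈ (P 0).top →
      (P j).tip + 2 * π * Complex.I * l ∉ (P 0).top → E i j (l - k) = 2 * π * Complex.I := by
    intro i j hi hj hij k l hk hl
    rw [← hshift]
    have h0 : ∀ i, i ≠ 0 → ∀ (k : ℤ) s t, ((P i).shift k).a s ≠ (P 0).b t := by
      intro i hi k s t
      have := hs i 0 hi k 0 s t
      simpa using this
    have h0' : ∀ i, i ≠ 0 → ∀ (k : ℤ) s t, ((P i).shift k).b s ≠ (P 0).a t := by
      intro i hi k s t
      have := (hs 0 i hi.symm 0 k t s).symm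
      simpa using this
    exact D_eq_of_top _ (P 0) _ (h0 j hj l) (h0' j hj l) (hs j i hij.symm l k)
      (fun s t => (hs i j hij k l t s).symm) (fun s t => (h0' i hi k t s).symm)
      (fun s t => (h0 i hi k t s).symm) hk hl
  -- some lift of the tip of `P 1` is in the top component, while the lift `d` levels lower is not:
  -- otherwise all lifts in an arithmetic progression going downwards would be in it
  have hex : ∀ d : ℤ, 1 ≤ d → ∃ i : ℤ, (P 1).tip + 2 * π * Complex.I * i ∈ (P 0).top ∧
      (P 1).tip + 2 * π * Complex.I * (i - d : ℤ) ∉ (P 0).top := by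
    intro d hd
    by_contra! hcon
    obtain ⟨i, hi⟩ := exists_int_gt (((P 0).M - (P 1).tip.im) / (2 * π))
    have hi' : (P 1).tip + 2 * π * Complex.I * i ∈ (P 0).top := by
      refine (P 0).mem_top_of_high ?_ ?_ ?_
      · simpa using (P 1).tip_re.1
      · simpa using (P 1).tip_re.2
      · rw [div_lt_iff₀ Real.two_pi_pos] at hi
        simp
        linarith
    have hall : ∀ k : ℕ, (P 1).tip + 2 * π * Complex.I * (i - k * d : ℤ) ∈ (P 0).top := by
      intro k
      induction k with
      | zero => simpa using hi'
      | succ k ih =>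
        have := hcon _ ih
        convert this using 4
        push_cast; ring
    obtain ⟨k, hk⟩ := exists_nat_gt (i + ((P 0).M + (P 1).tip.im) / (2 * π))
    refine (P 0).notMem_top_of_low ?_ (hall k)
    have h1 : ((P 0).M + (P 1).tip.im) / (2 * π) < k - i := by linarith
    rw [div_lt_iff₀ Real.two_pi_pos] at h1
    have h2 : (k : ℝ) ≤ k * d := by
      have : (1 : ℝ) ≤ d := by exact_mod_cast hd
      nlinarith [Nat.cast_nonneg (α := ℝ) k]
    have h3 : ((i : ℝ) - k * d) * (2 * π) ≤ (i - k) * (2 * π) :=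
      mul_le_mul_of_nonneg_right (by linarith) Real.two_pi_pos.le
    simp
    linarith
  -- `C 0` avoids `P 0`, so corresponding lifts of the tips of `P 1` and `P 2` are both in the top
  -- component or both outside it
  have hneg : ∀ d : ℤ, 1 ≤ d → E 1 2 (-d) = 2 * π * Complex.I := by
    intro d hd
    obtain ⟨i, hi, hi'⟩ := hex d hd
    have := key 1 2 (by decide) (by decide) (by decide) i (i - d) hi
      (fun hc => hi' (htop _ _ _ h02 h01 hc))
    rw [← this]
    congr 1; ring
  have hpos : ∀ d : ℤ, 1 ≤ d → E 1 2 d = 0 := by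
    intro d hd
    obtain ⟨i, hi, hi'⟩ := hex d hd
    have h1 := key 2 1 (by decide) (by decide) (by decide) i (i - d) (htop _ _ _ h01 h02 hi) hi'
    have h2 := hanti 1 2 (by decide) d
    rw [show i - d - i = -d by ring] at h1
    rw [h1] at h2
    linear_combination h2
  -- replacing one tip by another along a lifted edge, alternately with antisymmetry, leads once
  -- around the triangle
  have hsum : ∀ k : ℤ, E 1 2 k + E 1 2 (-k - n) = 2 * π * Complex.I := by
    intro k
    have e1 : E 1 2 k = E 1 0 (k + n) := by
      rw [hE]
      simp only
      rw [hD 1 k _ _ h12 h10]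
      congr 1
      push_cast; ring
    have e2 := hanti 1 0 (by decide) (k + n)
    have e3 : E 0 1 (-(k + n)) = E 0 2 (-(k + n)) := hD 0 _ _ _ h01 h02
    have e4 := hanti 2 0 (by decide) (k + n)
    have e5 : E 2 0 (k + n) = E 2 1 (k + n) := hD 2 _ _ _ h20 h21
    have e6 := hanti 2 1 (by decide) (k + n)
    rw [show -k - n = -(k + n) by ring]
    linear_combination e1 + e2 - e3 - e4 + e5 + e6
  have hpi : (2 * π * Complex.I : ℂ) ≠ 0 := Complex.two_pi_I_ne_zero
  by_contra! hcon
  rcases lt_trichotomy n 0 with hn | hn | hn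
  · have h1 := hsum 1
    rw [hpos 1 le_rfl, hpos (-1 - n) (by lia)] at h1
    exact hpi (by linear_combination -h1)
  · have h1 := hsum 0
    rw [hn] at h1
    obtain ⟨m, hm⟩ := (P 1).exists_int_D (hfree 1 0 _ h12)
    have hm' : E 1 2 0 = m * (2 * π * Complex.I) := hm
    rw [show (-0 - 0 : ℤ) = 0 by rfl, hm'] at h1
    have h2 : ((2 * m - 1 : ℤ) : ℂ) * (2 * π * Complex.I) = 0 := by
      push_cast; linear_combination h1
    have h3 := (mul_eq_zero.1 h2).resolve_right hpi
    have h4 : 2 * m - 1 = 0 := by exact_mod_cast h3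
    lia
  · have h1 := hsum (-1)
    rw [hneg 1 le_rfl, show (- -1 - n : ℤ) = -(n - 1) by ring, hneg (n - 1) (by lia)] at h1
    exact hpi (by linear_combination h1)

end Line

/-! ### Passage to the logarithmic plane -/

/-- The part of a path `u` issuing from `0` after its last visit to the circle of radius `exp (-N)`
lifts through `exp`, with a prescribed lift `c` of the end of the path. -/
lemma exists_lift_truncated {u : ℝ → ℂ} (hu : ContinuousOn u (Icc 0 1)) (hu0 : u 0 = 0) {N : ℝ}
    (hN : ∀ t ∈ Icc (0 : ℝ) 1, ‖u t‖ < Real.exp N) {c : ℂ} (hc : Complex.exp c = u 1)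
    (hcN : -N < c.re) :
    ∃ a : unitInterval → ℂ, Continuous a ∧ (a 0).re ≤ -N ∧ (∀ s, (a s).re < N) ∧ a 1 = c ∧
      ∀ s, ∃ t ∈ Icc (0 : ℝ) 1, Complex.exp (a s) = u t := by
  have hc1 : Real.exp (-N) ≤ ‖u 1‖ := by
    rw [← hc, Complex.norm_exp]
    exact Real.exp_le_exp.2 hcN.le
  obtain ⟨t0, ht0, hgr⟩ : ∃ t, IsGreatest (Icc 0 1 ∩ (fun t => ‖u t‖) ⁻¹' {Real.exp (-N)}) t := by
    refine IsCompact.exists_isGreatest ?_ ?_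
    · exact isCompact_Icc.of_isClosed_subset
        (hu.norm.preimage_isClosed_of_isClosed isClosed_Icc isClosed_singleton) inter_subset_left
    · obtain ⟨t, ht, h⟩ := intermediate_value_Icc zero_le_one hu.norm
        (show Real.exp (-N) ∈ Icc ‖u 0‖ ‖u 1‖ by
          rw [hu0, norm_zero]; exact ⟨(Real.exp_pos _).le, hc1⟩)
      exact ⟨t, ht, h⟩
  have hge : ∀ s ∈ Icc t0 1, Real.exp (-N) ≤ ‖u s‖ := by
    intro s hs
    by_contra! hlt
    obtain ⟨t, ht, h⟩ := intermediate_value_Icc hs.2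
      (hu.norm.mono (Icc_subset_Icc_left (ht0.1.1.trans hs.1))) ⟨hlt.le, hc1⟩
    have h1 : t ≤ t0 := hgr ⟨⟨(ht0.1.1.trans hs.1).trans ht.1, ht.2⟩, h⟩
    have h2 : s = t := le_antisymm ht.1 (h1.trans hs.1)
    rw [h2] at hlt
    exact hlt.ne h
  -- the path from its end to its point at time `t0`
  let r : unitInterval → ℝ := fun s => 1 - s * (1 - t0)
  have hr : ∀ s, r s ∈ Icc t0 1 := by
    intro s
    have h1 := s.2.1
    have h2 := s.2.2
    have h3 := ht0.1.2
    constructor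
    · simp only [r]; nlinarith
    · simp only [r]; nlinarith
  have hr' : ∀ s, r s ∈ Icc (0 : ℝ) 1 := fun s => ⟨ht0.1.1.trans (hr s).1, (hr s).2⟩
  have hrc : Continuous r := by simp only [r]; fun_prop
  have hne : ∀ s, u (r s) ≠ 0 := fun s =>
    norm_pos_iff.1 ((Real.exp_pos _).trans_le (hge _ (hr s)))
  let γ : C(unitInterval, {z : ℂ // z ≠ 0}) :=
    ⟨fun s => ⟨u (r s), hne s⟩, (hu.comp_continuous hrc hr').subtype_mk _⟩
  obtain ⟨Γ, hΓ, hΓ0⟩ := Complex.isCoveringMap_exp.exists_path_lifts γ c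
    (Subtype.ext (by simp [γ, r, hc]))
  have hΓ' : ∀ s, Complex.exp (Γ s) = u (r s) := fun s => congrArg Subtype.val (congr_fun hΓ s)
  have hre : ∀ s, Real.exp (Γ s).re = ‖u (r s)‖ := fun s => by rw [← hΓ' s, Complex.norm_exp]
  refine ⟨fun s => Γ (unitInterval.symm s), by fun_prop, ?_, fun s => ?_, ?_, fun s => ?_⟩
  · have h1 : r 1 = t0 := by simp [r]
    have h2 := hre 1
    have h3 : ‖u t0‖ = Real.exp (-N) := ht0.2
    rw [h1, h3] at h2
    simp only [unitInterval.symm_zero]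
    exact (Real.exp_injective h2).le
  · rw [← Real.exp_lt_exp, hre]
    exact hN _ (hr' _)
  · simp only [unitInterval.symm_one, hΓ0]
  · exact ⟨_, hr' _, hΓ' _⟩

lemma isEdge_iff {i j : Fin 5} : IsEdge i j ↔ i ≠ j ∧ ¬ (i = 3 ∧ j = 4 ∨ i = 4 ∧ j = 3) := by
  rw [IsEdge, ne_eq _ ({3, 4} : Set (Fin 5)), Set.pair_eq_pair_iff]

/-- The pairs `i, j` and `k, l` are disjoint edges of `K₅ − (4,5)`, in a decidable form. -/
abbrev DisjointEdges (i j k l : Fin 5) : Prop :=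
  (i ≠ j ∧ ¬ (i = 3 ∧ j = 4 ∨ i = 4 ∧ j = 3)) ∧
    (k ≠ l ∧ ¬ (k = 3 ∧ l = 4 ∨ k = 4 ∧ l = 3)) ∧ i ≠ k ∧ i ≠ l ∧ j ≠ k ∧ j ≠ l

lemma AlmostEmb.ne {g : (Fin 5 → ℝ) → ℂ} (hg : AlmostEmb g) {i j k l : Fin 5}
    (h : DisjointEdges i j k l) {x y : Fin 5 → ℝ} (hx : x ∈ seg i j) (hy : y ∈ seg k l) : g x ≠ g y := by
  have hd := hg.2 i j k l (isEdge_iff.2 h.1) (isEdge_iff.2 h.2.1) (by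
    obtain ⟨-, -, h1, h2, h3, h4⟩ := h
    ext z
    simp only [mem_inter_iff, mem_insert_iff, mem_singleton_iff, mem_empty_iff_false, iff_false]
    rintro ⟨rfl | rfl, rfl | rfl⟩ <;> contradiction)
  exact fun e => disjoint_left.1 hd (mem_image_of_mem g hx) (e ▸ mem_image_of_mem g hy)

/-- The point of the edge from vertex `i` to vertex `j` at time `t`. -/
def edgePt (i j : Fin 5) (t : ℝ) : Fin 5 → ℝ := (1 - t) • vert i + t • vert j

lemma edgePt_mem {i j : Fin 5} {t : ℝ} (ht : t ∈ Icc (0 : ℝ) 1) : edgePt i j t ∈ seg i j :=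
  ⟨1 - t, t, by linarith [ht.2], ht.1, by ring, rfl⟩

lemma edgePt_zero (i j : Fin 5) : edgePt i j 0 = vert i := by simp [edgePt]

lemma edgePt_one (i j : Fin 5) : edgePt i j 1 = vert j := by simp [edgePt]

lemma AlmostEmb.continuousOn_edgePt {g : (Fin 5 → ℝ) → ℂ} (hg : AlmostEmb g) {i j : Fin 5}
    (h : i ≠ j ∧ ¬ (i = 3 ∧ j = 4 ∨ i = 4 ∧ j = 3)) :
    ContinuousOn (fun t => g (edgePt i j t)) (Icc 0 1) := by
  refine hg.1.comp (by unfold edgePt; fun_prop) fun t ht => ?_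
  exact mem_iUnion₂.2 ⟨i, j, mem_iUnion.2 ⟨isEdge_iff.2 h, edgePt_mem ht⟩⟩

lemma triLoop_fst {t : ℝ} (h : t ≤ 1 / 3) : triLoop t = edgePt 0 1 (3 * t) := by
  rw [triLoop, if_pos h, edgePt]

lemma triLoop_snd {t : ℝ} (h : 1 / 3 ≤ t) (h' : t ≤ 2 / 3) :
    triLoop t = edgePt 1 2 (3 * t - 1) := by
  rcases h.eq_or_lt with rfl | h
  · rw [triLoop_fst le_rfl]; norm_num [edgePt_one, edgePt_zero]
  · rw [triLoop, if_neg h.not_ge, if_pos h', edgePt]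
    congr 2; ring

lemma triLoop_trd {t : ℝ} (h : 2 / 3 ≤ t) : triLoop t = edgePt 2 0 (3 * t - 2) := by
  rcases h.eq_or_lt with rfl | h
  · rw [triLoop_snd (by norm_num) le_rfl]; norm_num [edgePt_one, edgePt_zero]
  · rw [triLoop, if_neg (by linarith), if_neg h.not_ge, edgePt]
    congr 2; ring

lemma div_sub_injective {A B z w : ℂ} (hAB : A ≠ B) (hz : z ≠ B) (hw : w ≠ B)
    (h : (z - A) / (z - B) = (w - A) / (w - B)) : z = w := by
  rw [div_eq_div_iff (sub_ne_zero.2 hz) (sub_ne_zero.2 hw)] at h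
  have : (z - w) * (A - B) = 0 := by linear_combination h
  exact sub_eq_zero.1 ((mul_eq_zero.1 this).resolve_right (sub_ne_zero.2 hAB))

lemma exp_add_int_mul (z : ℂ) (k : ℤ) :
    Complex.exp (z + 2 * π * Complex.I * k) = Complex.exp z := by
  rw [Complex.exp_eq_exp_iff_exists_int]
  exact ⟨k, by ring⟩

/-- For any continuous almost embedding `g : K₅ − (4,5) → ℝ²` one has
`l(g) = w(g|K₃, g4) − w(g|K₃, g5) = ±1`. -/
theorem winding_difference_eq_pm_one (g : (Fin 5 → ℝ) → ℂ) (hg : AlmostEmb g)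
    (n4 n5 : ℤ)
    (h4 : IsWindingNumber (fun t => g (triLoop t)) (g (vert 3)) n4)
    (h5 : IsWindingNumber (fun t => g (triLoop t)) (g (vert 4)) n5) :
    n4 - n5 = 1 ∨ n4 - n5 = -1 := by
  obtain ⟨H4, H4c, H4e, H4n⟩ := h4
  obtain ⟨H5, H5c, H5e, H5n⟩ := h5
  set A := g (vert 3) with hA
  set B := g (vert 4) with hB
  have hv3 : ∀ i, vert 3 ∈ seg 3 i := fun i => left_mem_segment ℝ _ _
  have hv4 : ∀ i, vert 4 ∈ seg 4 i := fun i => left_mem_segment ℝ _ _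
  have hAB : A ≠ B := hg.ne (i := 3) (j := 0) (k := 4) (l := 1) (by decide) (hv3 _) (hv4 _)
  -- the vertices of the triangle and the end points of the opposite edges
  let v : Fin 3 → Fin 5 := ![0, 1, 2]
  let e1 : Fin 3 → Fin 5 := ![1, 2, 0]
  let e2 : Fin 3 → Fin 5 := ![2, 0, 1]
  have d34 : ∀ i j, i ≠ j → DisjointEdges 3 (v i) 4 (v j) := by decide
  have d3 : ∀ i, DisjointEdges 3 (v i) (e1 i) (e2 i) := by decide
  have d4 : ∀ i, DisjointEdges 4 (v i) (e1 i) (e2 i) := by decide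
  -- `h` is a continuous logarithm of `(z - A) / (z - B)` along the triangle
  set h : ℝ → ℂ := fun t => H4 t - H5 t with hh
  have hc : ContinuousOn h (Icc 0 1) := H4c.sub H5c
  have hzB : ∀ t ∈ Icc (0 : ℝ) 1, g (triLoop t) ≠ B := by
    intro t ht e
    have := H5e t ht
    simp only at this
    rw [e, left_eq_add] at this
    exact Complex.exp_ne_zero _ this
  have he : ∀ t ∈ Icc (0 : ℝ) 1,
      Complex.exp (h t) = (g (triLoop t) - A) / (g (triLoop t) - B) := by
    intro t ht
    have h1 := H4e t ht
    have h2 := H5e t ht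
    simp only at h1 h2
    rw [hh, Complex.exp_sub]
    congr 1
    · rw [h1]; ring
    · rw [h2]; ring
  have hn : h 1 = h 0 + 2 * π * Complex.I * (n4 - n5 : ℤ) := by
    simp only [hh]
    push_cast
    linear_combination H4n - H5n
  let τ : Fin 3 → ℝ := ![0, 1 / 3, 2 / 3]
  have hτ : ∀ i, τ i ∈ Icc (0 : ℝ) 1 := by
    intro i; fin_cases i <;> norm_num [τ]
  have hτv : ∀ i, triLoop (τ i) = vert (v i) := by
    intro i
    fin_cases i
    · simp [τ, v, triLoop_fst, edgePt_zero]
    · simp [τ, v, triLoop_fst, edgePt_one]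
    · simp only [τ, v, Fin.reduceFinMk, Matrix.cons_val]
      rw [triLoop_trd le_rfl]; norm_num [edgePt_zero]
  -- the edges of the vertices `3` and `4` in the coordinates `(z - A) / (z - B)`, resp. its inverse
  set ua : Fin 3 → ℝ → ℂ :=
    fun i t => (g (edgePt 3 (v i) t) - A) / (g (edgePt 3 (v i) t) - B) with hua
  set ub : Fin 3 → ℝ → ℂ :=
    fun i t => (g (edgePt 4 (v i) t) - B) / (g (edgePt 4 (v i) t) - A) with hub
  have haB : ∀ i, ∀ t ∈ Icc (0 : ℝ) 1, g (edgePt 3 (v i) t) ≠ B := by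
    intro i t ht
    fin_cases i
    · exact hg.ne (k := 4) (l := 1) (by decide) (edgePt_mem ht) (hv4 _)
    · exact hg.ne (k := 4) (l := 2) (by decide) (edgePt_mem ht) (hv4 _)
    · exact hg.ne (k := 4) (l := 0) (by decide) (edgePt_mem ht) (hv4 _)
  have hbA : ∀ i, ∀ t ∈ Icc (0 : ℝ) 1, g (edgePt 4 (v i) t) ≠ A := by
    intro i t ht
    fin_cases i
    · exact hg.ne (k := 3) (l := 1) (by decide) (edgePt_mem ht) (hv3 _)
    · exact hg.ne (k := 3) (l := 2) (by decide) (edgePt_mem ht) (hv3 _)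
    · exact hg.ne (k := 3) (l := 0) (by decide) (edgePt_mem ht) (hv3 _)
  have huac : ∀ i, ContinuousOn (ua i) (Icc 0 1) := by
    intro i
    have := hg.continuousOn_edgePt (i := 3) (j := v i) (d3 i).1
    exact (this.sub continuousOn_const).div (this.sub continuousOn_const)
      fun t ht => sub_ne_zero.2 (haB i t ht)
  have hubc : ∀ i, ContinuousOn (ub i) (Icc 0 1) := by
    intro i
    have := hg.continuousOn_edgePt (i := 4) (j := v i) (d4 i).1
    exact (this.sub continuousOn_const).div (this.sub continuousOn_const)
      fun t ht => sub_ne_zero.2 (hbA i t ht)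
  have hbd : ∃ N : ℝ, (∀ i, ∀ t ∈ Icc (0 : ℝ) 1, ‖ua i t‖ < Real.exp N) ∧
      (∀ i, ∀ t ∈ Icc (0 : ℝ) 1, ‖ub i t‖ < Real.exp N) ∧
      ∀ t ∈ Icc (0 : ℝ) 1, |(h t).re| < N := by
    have h1 := fun i => isCompact_Icc.exists_bound_of_continuousOn (huac i)
    have h2 := fun i => isCompact_Icc.exists_bound_of_continuousOn (hubc i)
    obtain ⟨K, hK⟩ := isCompact_Icc.exists_bound_of_continuousOn hc
    choose K1 hK1 using h1
    choose K2 hK2 using h2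
    obtain ⟨M1, hM1⟩ := (Set.finite_range K1).bddAbove
    obtain ⟨M2, hM2⟩ := (Set.finite_range K2).bddAbove
    have hexp : ∀ x N : ℝ, x < N → x < Real.exp N := fun x N hx => by
      linarith [Real.add_one_le_exp N]
    refine ⟨max M1 (max M2 K) + 1, fun i t ht => hexp _ _ ?_, fun i t ht => hexp _ _ ?_,
      fun t ht => ?_⟩
    · linarith [hK1 i t ht, hM1 (mem_range_self i), le_max_left M1 (max M2 K)]
    · linarith [hK2 i t ht, hM2 (mem_range_self i), le_max_left M2 K, le_max_right M1 (max M2 K)]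
    · linarith [hK t ht, Complex.abs_re_le_norm (h t), le_max_right M2 K,
        le_max_right M1 (max M2 K)]
  obtain ⟨N, hNa, hNb, hNh⟩ := hbd
  have hLa := fun i => exists_lift_truncated (huac i)
    (by simp [hua, edgePt_zero, hA]) (hNa i) (c := h (τ i))
    (by rw [he _ (hτ i), hτv, hua]; simp only [edgePt_one]) (abs_lt.1 (hNh _ (hτ i))).1
  have hLb := fun i => exists_lift_truncated (hubc i)
    (by simp [hub, edgePt_zero, hB]) (hNb i) (c := -h (τ i))
    (by rw [Complex.exp_neg, he _ (hτ i), hτv, hub, inv_div]; simp only [edgePt_one])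
    (by rw [Complex.neg_re]; linarith [(abs_lt.1 (hNh _ (hτ i))).2])
  choose a ca a0 aN a1 ae using hLa
  choose b cb b0 bN b1 be using hLb
  let P : Fin 3 → Line N := fun i =>
    { a := a i
      b := fun s => -b i s
      ca := ca i
      cb := (cb i).neg
      a_zero := a0 i
      b_zero := by rw [Complex.neg_re]; linarith [b0 i]
      a_lt := aN i
      b_gt := fun s => by rw [Complex.neg_re]; linarith [bN i s]
      a_one := by rw [a1, b1, neg_neg] }
  have htip : ∀ i, (P i).tip = h (τ i) := fun i => by
    change -b i 1 = _
    rw [b1, neg_neg]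
  have hPa : ∀ i s, ∃ z ∈ seg 3 (v i), g z ≠ B ∧
      Complex.exp ((P i).a s) = (g z - A) / (g z - B) := by
    intro i s
    obtain ⟨t, ht, e⟩ := ae i s
    exact ⟨_, edgePt_mem ht, haB i t ht, e⟩
  have hPb : ∀ i s, ∃ z ∈ seg 4 (v i), g z ≠ B ∧
      Complex.exp ((P i).b s) = (g z - A) / (g z - B) := by
    intro i s
    obtain ⟨t, ht, e⟩ := be i s
    refine ⟨_, edgePt_mem ht, fun hcon => ?_, ?_⟩
    · simp only [hub] at e
      rw [hcon, sub_self, zero_div] at e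
      exact Complex.exp_ne_zero _ e
    · change Complex.exp (-b i s) = _
      rw [Complex.exp_neg, e, hub, inv_div]
  -- `h '' I i` is a lift of the edge opposite to the vertex `i`
  let I : Fin 3 → Set ℝ := ![Icc (1 / 3) (2 / 3), Icc (2 / 3) 1, Icc 0 (1 / 3)]
  have hI : ∀ i, I i ⊆ Icc 0 1 := by
    intro i
    fin_cases i
    · exact Icc_subset_Icc (by norm_num) (by norm_num)
    · exact Icc_subset_Icc (by norm_num) (by norm_num)
    · exact Icc_subset_Icc (by norm_num) (by norm_num)
  have hIe : ∀ i, ∀ t ∈ I i, triLoop t ∈ seg (e1 i) (e2 i) := by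
    intro i t ht
    fin_cases i
    · have ht' : t ∈ Icc (1 / 3 : ℝ) (2 / 3) := ht
      rw [triLoop_snd ht'.1 ht'.2]
      exact edgePt_mem ⟨by linarith [ht'.1], by linarith [ht'.2]⟩
    · have ht' : t ∈ Icc (2 / 3 : ℝ) 1 := ht
      rw [triLoop_trd ht'.1]
      exact edgePt_mem ⟨by linarith [ht'.1], by linarith [ht'.2]⟩
    · have ht' : t ∈ Icc (0 : ℝ) (1 / 3) := ht
      rw [triLoop_fst ht'.2]
      exact edgePt_mem ⟨by linarith [ht'.1], by linarith [ht'.2]⟩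
  have hIc : ∀ i, IsPreconnected (I i) := by
    intro i
    fin_cases i <;> exact isPreconnected_Icc
  refine Line.eq_one_or_eq_neg_one P (n4 - n5) ?_ (fun i => h '' I i)
    (fun i => (hIc i).image _ (hc.mono (hI i))) ?_ ?_ ?_ ?_ ?_ ?_ ?_
  · intro i j hij k s t heq
    obtain ⟨z, hz, hzB, hze⟩ := hPa i s
    obtain ⟨w, hw, hwB, hwe⟩ := hPb j t
    have e := congrArg Complex.exp heq
    rw [exp_add_int_mul, hze, hwe] at e
    exact hg.ne (d34 i j hij) hz hw (div_sub_injective hAB hzB hwB e)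
  · rintro i k _ ⟨t, ht, rfl⟩
    have ht' := hI i ht
    have hN' := abs_lt.1 (hNh t ht')
    refine ⟨by simpa using hN'.1, by simpa using hN'.2, fun s heq => ?_, fun s heq => ?_⟩
    · obtain ⟨z, hz, hz_B, hze⟩ := hPa i s
      have e := congrArg Complex.exp heq
      rw [exp_add_int_mul, hze, he t ht'] at e
      exact hg.ne (d3 i) hz (hIe i t ht)
        (div_sub_injective hAB hz_B (hzB t ht') e)
    · obtain ⟨z, hz, hz_B, hze⟩ := hPb i s
      have e := congrArg Complex.exp heq
      rw [exp_add_int_mul, hze, he t ht'] at e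
      exact hg.ne (d4 i) hz (hIe i t ht)
        (div_sub_injective hAB hz_B (hzB t ht') e)
  · rw [htip]; exact ⟨_, ⟨le_rfl, by norm_num [τ]⟩, rfl⟩
  · rw [htip]; exact ⟨_, ⟨by norm_num [τ], le_rfl⟩, rfl⟩
  · rw [htip]; exact ⟨_, ⟨le_rfl, by norm_num [τ]⟩, rfl⟩
  · rw [htip]; exact ⟨_, ⟨by norm_num [τ], le_rfl⟩, rfl⟩
  · rw [htip]; exact ⟨_, ⟨le_rfl, by norm_num [τ]⟩, rfl⟩
  · rw [htip]
    exact ⟨1, ⟨by norm_num, le_rfl⟩, hn⟩
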